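/- Let γ₀ : ℂ⁵ → ℂ be holomorphic (entire) and satisfy the sub-Laplacian equation Δ_bγ₀ := V₀₀′(V₁₁′γ₀) − V₁₀′(V₀₁′γ₀) = 0. Then there exists a two-sided sequence (γ_i)_{i∈ℤ} of holomorphic functions ℂ⁵ → ℂ, with the given γ₀ in position 0, satisfying the recursion V₀₁′γ_i = V₀₀′γ_{i+1} and V₁₁′γ_i = V₁₀′γ_{i+1} for every i ∈ ℤ. (Equivalently, V_Aγ ≡ 0 for A = 0,1 holds for the formal Laurent series γ = Σ_i γ_{-i}ζ^i.) -/

import Mathlib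

/-- Complex partial derivative in the `i`-th coordinate direction on `ℂ⁵`. -/
noncomputable def pd (i : Fin 5) (f : (Fin 5 → ℂ) → ℂ) (y : Fin 5 → ℂ) : ℂ :=
  fderiv ℂ f y (Pi.single i 1)

/-- Coordinates on `ℂ⁵` are `(y₀₀′, y₁₀′, y₀₁′, y₁₁′, t)`, with indices `0,1,2,3,4`. -/
noncomputable def V00 (f : (Fin 5 → ℂ) → ℂ) (y : Fin 5 → ℂ) : ℂ := pd 0 f y - y 3 * pd 4 f y
noncomputable def V01 (f : (Fin 5 → ℂ) → ℂ) (y : Fin 5 → ℂ) : ℂ := pd 2 f y + y 1 * pd 4 f y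
noncomputable def V10 (f : (Fin 5 → ℂ) → ℂ) (y : Fin 5 → ℂ) : ℂ := pd 1 f y - y 2 * pd 4 f y
noncomputable def V11 (f : (Fin 5 → ℂ) → ℂ) (y : Fin 5 → ℂ) : ℂ := pd 3 f y + y 0 * pd 4 f y
noncomputable def T5 (f : (Fin 5 → ℂ) → ℂ) (y : Fin 5 → ℂ) : ℂ := pd 4 f y

open Metric Set MeasureTheory intervalIntegral

section Holomorphic

variable {E : Type*} [NormedAddCommGroup E] [NormedSpace ℂ E]

theorem hasDerivAt_comp_line {f : E → ℂ} (hf : Differentiable ℂ f) (x v : E) (z : ℂ) :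
    HasDerivAt (fun z : ℂ => f (x + z • v)) (fderiv ℂ f (x + z • v) v) z := by
  have hl : HasDerivAt (fun z : ℂ => x + z • v) v z := by
    simpa using ((hasDerivAt_id z).smul_const v).const_add x
  exact (hf _).hasFDerivAt.comp_hasDerivAt z hl

theorem fderiv_apply_eq_circleIntegral {f : E → ℂ} (hf : Differentiable ℂ f) (x v : E) :
    fderiv ℂ f x v =
      (2 * Real.pi * Complex.I : ℂ)⁻¹ • ∮ z in C(0, 1), ((z - 0) ^ 2)⁻¹ • f (x + z • v) := by
  have hline : Differentiable ℂ fun z : ℂ => f (x + z • v) := by fun_prop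
  rw [Complex.two_pi_I_inv_smul_circleIntegral_sub_sq_inv_smul_of_differentiable isOpen_univ
    (subset_univ _) hline.differentiableOn (mem_ball_self one_pos)]
  simpa using (hasDerivAt_comp_line hf x v 0).deriv.symm

variable [FiniteDimensional ℂ E]

/-- Differentiation under the integral sign for a continuous family of entire functions. -/
theorem hasFDerivAt_integral_of_differentiable {F : E → ℝ → ℂ} {a b : ℝ} (hab : a ≤ b)
    (hF : Continuous (Function.uncurry F)) (hd : ∀ s, Differentiable ℂ fun x => F x s) (x₀ : E) :
    IntervalIntegrable (fun s => fderiv ℂ (fun x => F x s) x₀) volume a b ∧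
      HasFDerivAt (fun x => ∫ s in a..b, F x s)
        (∫ s in a..b, fderiv ℂ (fun x => F x s) x₀) x₀ := by
  have : ProperSpace E := FiniteDimensional.proper ℂ E
  have : ProperSpace (E →L[ℂ] ℂ) := FiniteDimensional.proper ℂ _
  borelize E
  obtain ⟨C, hC⟩ := ((isCompact_closedBall x₀ 2).prod (isCompact_Icc (a := a) (b := b))
    ).exists_bound_of_continuousOn hF.continuousOn
  have hbound : ∀ s ∈ Ioc a b, ∀ x ∈ ball x₀ 1, ‖fderiv ℂ (fun x => F x s) x‖ ≤ 2 * C := by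
    intro s hs x hx
    have hsub : ∀ z ∈ ball x 1, ‖F z s‖ ≤ C := fun z hz =>
      hC (z, s) ⟨by
        rw [mem_closedBall]; rw [mem_ball] at hx hz
        linarith [dist_triangle z x x₀], Ioc_subset_Icc_self hs⟩
    have := Complex.norm_fderiv_le_div_of_mapsTo_ball (R₁ := 1) (R₂ := 2 * C)
      (hd s).differentiableOn (c := x) (fun z hz => by
        rw [mem_closedBall, dist_eq_norm]
        linarith [norm_sub_le (F z s) (F x s), hsub z hz, hsub x (mem_ball_self one_pos)])
      one_pos
    simpa using this
  have hcont : ∀ x, Continuous (F x) := fun x => hF.comp (Continuous.prodMk_right x)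
  have hmeas : Measurable fun s => fderiv ℂ (fun x => F x s) x₀ :=
    (measurable_fderiv_with_param (𝕜 := ℂ) (f := fun s x => F x s)
      (hF.comp continuous_swap)).comp (measurable_id.prodMk measurable_const)
  have hF'_int : IntegrableOn (fun s => fderiv ℂ (fun x => F x s) x₀) (Ioc a b) :=
    Measure.integrableOn_of_bounded (M := 2 * C) (by simp) hmeas.aestronglyMeasurable
      ((ae_restrict_mem measurableSet_Ioc).mono fun s hs => hbound s hs x₀ (mem_ball_self one_pos))
  refine ⟨(intervalIntegrable_iff_integrableOn_Ioc_of_le hab).2 hF'_int, ?_⟩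
  simp only [integral_of_le hab]
  exact hasFDerivAt_integral_of_dominated_of_fderiv_le (bound := fun _ => 2 * C)
    (ball_mem_nhds x₀ one_pos) (.of_forall fun x => (hcont x).aestronglyMeasurable)
    ((hcont x₀).integrableOn_Ioc) hmeas.aestronglyMeasurable
    ((ae_restrict_mem measurableSet_Ioc).mono hbound)
    (integrable_const _) (.of_forall fun s x _ => (hd s x).hasFDerivAt)

theorem differentiable_integral_of_differentiable {F : E → ℝ → ℂ} {a b : ℝ} (hab : a ≤ b)
    (hF : Continuous (Function.uncurry F)) (hd : ∀ s, Differentiable ℂ fun x => F x s) :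
    Differentiable ℂ fun x => ∫ s in a..b, F x s := fun x =>
  (hasFDerivAt_integral_of_differentiable hab hF hd x).2.differentiableAt

theorem Differentiable.fderiv_apply_of_complex {f : E → ℂ} (hf : Differentiable ℂ f) (v : E) :
    Differentiable ℂ fun x => fderiv ℂ f x v := by
  simp only [fderiv_apply_eq_circleIntegral hf, circleIntegral]
  refine Differentiable.fun_const_smul (differentiable_integral_of_differentiable (E := E)
    Real.two_pi_pos.le ?_ ?_) _
  rotate_left
  · intro s
    fun_prop
  have hc := hf.continuous
  have hcirc : Continuous fun p : E × ℝ => circleMap 0 1 p.2 :=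
    (continuous_circleMap 0 1).comp continuous_snd
  have hne : ∀ p : E × ℝ, (circleMap 0 1 p.2 - 0) ^ 2 ≠ 0 := fun p => by simp
  simp only [deriv_circleMap]
  have hinv := Continuous.inv₀ (by fun_prop) hne
  simp only [Function.uncurry_def]
  fun_prop

theorem Differentiable.fderiv_of_complex {f : E → ℂ} (hf : Differentiable ℂ f) :
    Differentiable ℂ (fderiv ℂ f) := by
  let e₁ : E ≃L[ℂ] (Fin (Module.finrank ℂ E) → ℂ) :=
    ContinuousLinearEquiv.ofFinrankEq (Module.finrank_fin_fun ℂ).symm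
  let e₂ := (e₁.arrowCongr (1 : ℂ ≃L[ℂ] ℂ)).trans
    (ContinuousLinearEquiv.piRing (Fin (Module.finrank ℂ E)))
  rw [← Function.id_comp (fderiv ℂ f), ← e₂.symm_comp_self]
  exact e₂.symm.differentiable.comp
    (differentiable_pi.mpr fun i => hf.fderiv_apply_of_complex _)

theorem fderiv_fderiv_apply_comm {f : E → ℂ} (hf : Differentiable ℂ f) (x v w : E) :
    fderiv ℂ (fun y => fderiv ℂ f y v) x w = fderiv ℂ (fun y => fderiv ℂ f y w) x v := by
  have h := hf.fderiv_of_complex x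
  rw [fderiv_clm_apply h (by fun_prop), fderiv_clm_apply h (by fun_prop)]
  simpa using second_derivative_symmetric (fun y => (hf y).hasFDerivAt) h.hasFDerivAt w v

end Holomorphic

theorem Differentiable.pd {f : (Fin 5 → ℂ) → ℂ} (hf : Differentiable ℂ f) (i : Fin 5) :
    Differentiable ℂ (pd i f) :=
  hf.fderiv_apply_of_complex _

theorem pd_comm {f : (Fin 5 → ℂ) → ℂ} (hf : Differentiable ℂ f) (i j : Fin 5) (y : Fin 5 → ℂ) :
    pd i (pd j f) y = pd j (pd i f) y :=
  fderiv_fderiv_apply_comm hf y _ _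

theorem pd_add {f g : (Fin 5 → ℂ) → ℂ} (hf : Differentiable ℂ f) (hg : Differentiable ℂ g)
    (i : Fin 5) (y : Fin 5 → ℂ) : pd i (fun x => f x + g x) y = pd i f y + pd i g y := by
  simp only [pd]
  rw [fderiv_fun_add (hf y) (hg y)]
  rfl

theorem pd_sub {f g : (Fin 5 → ℂ) → ℂ} (hf : Differentiable ℂ f) (hg : Differentiable ℂ g)
    (i : Fin 5) (y : Fin 5 → ℂ) : pd i (fun x => f x - g x) y = pd i f y - pd i g y := by
  simp only [pd]
  rw [fderiv_fun_sub (hf y) (hg y)]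
  rfl

theorem pd_coord_mul {f : (Fin 5 → ℂ) → ℂ} (hf : Differentiable ℂ f) (i k : Fin 5)
    (y : Fin 5 → ℂ) : pd i (fun x => x k * f x) y =
      y k * pd i f y + (Pi.single i (1 : ℂ) : Fin 5 → ℂ) k * f y := by
  have h := ((ContinuousLinearMap.proj (R := ℂ) (φ := fun _ : Fin 5 => ℂ) k).hasFDerivAt
    (x := y)).mul (hf y).hasFDerivAt
  simp only [pd]
  rw [show fderiv ℂ (fun x : Fin 5 → ℂ => x k * f x) y = _ from h.fderiv]
  simp [mul_comm]

/-- Every entire function has an entire primitive in each coordinate direction. -/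
theorem exists_pd_eq {f : (Fin 5 → ℂ) → ℂ} (hf : Differentiable ℂ f) (i : Fin 5) :
    ∃ g, Differentiable ℂ g ∧ ∀ y, pd i g y = f y := by
  let F : (Fin 5 → ℂ) → ℝ → ℂ := fun y s => y i * f (y + (((s : ℂ) - 1) * y i) • Pi.single i 1)
  have hc := hf.continuous
  have hF : Continuous (Function.uncurry F) := by
    simp only [F, Function.uncurry_def]
    fun_prop
  have hd : ∀ s, Differentiable ℂ fun y => F y s := fun s => by
    simp only [F]
    fun_prop
  have key := hasFDerivAt_integral_of_differentiable zero_le_one hF hd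
  refine ⟨fun y => ∫ s in (0 : ℝ)..1, F y s, fun y => (key y).2.differentiableAt, fun y => ?_⟩
  rw [pd, (key y).2.fderiv, ContinuousLinearMap.intervalIntegral_apply (key y).1]
  have hprim : ∀ s : ℝ, HasDerivAt
      (fun s : ℝ => (s : ℂ) * f (y + (((s : ℂ) - 1) * y i) • Pi.single i 1))
      (fderiv ℂ (fun y => F y s) y (Pi.single i 1)) s := by
    intro s
    set p := y + (((s : ℂ) - 1) * y i) • (Pi.single i 1 : Fin 5 → ℂ) with hp
    have hpi : HasFDerivAt (fun y : Fin 5 → ℂ => y i)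
      (ContinuousLinearMap.proj (R := ℂ) (φ := fun _ : Fin 5 => ℂ) i) y :=
      (ContinuousLinearMap.proj (R := ℂ) (φ := fun _ : Fin 5 => ℂ) i).hasFDerivAt
    have hin : HasFDerivAt
        (fun y : Fin 5 → ℂ => y + (((s : ℂ) - 1) * y i) • (Pi.single i 1 : Fin 5 → ℂ)) _ y :=
      (hasFDerivAt_id y).add ((hpi.const_mul ((s : ℂ) - 1)).smul_const _)
    have h1 := (hpi.mul ((hf p).hasFDerivAt.comp y hin)).fderiv
    have hl : HasDerivAt (fun z : ℂ => y + ((z - 1) * y i) • (Pi.single i 1 : Fin 5 → ℂ))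
        (y i • Pi.single i 1) (s : ℂ) := by
      simpa using ((((hasDerivAt_id (s : ℂ)).sub_const 1).mul_const (y i)).smul_const
        (Pi.single i 1 : Fin 5 → ℂ)).const_add y
    have h2 := ((hasDerivAt_id (s : ℂ)).mul
      ((hf p).hasFDerivAt.comp_hasDerivAt (s : ℂ) hl)).comp_ofReal
    have hval : fderiv ℂ (fun y => F y s) y (Pi.single i 1) =
        f p + s * (y i * fderiv ℂ f p (Pi.single i 1)) := by
      refine (DFunLike.congr_fun h1 (Pi.single i 1)).trans ?_
      change y i * fderiv ℂ f p (Pi.single i 1 +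
        ((s - 1) * (Pi.single i (1 : ℂ) : Fin 5 → ℂ) i) • (Pi.single i 1 : Fin 5 → ℂ)) +
          f p * (Pi.single i (1 : ℂ) : Fin 5 → ℂ) i = _
      simp only [Pi.single_eq_same, map_add, map_smul, smul_eq_mul]
      ring
    rw [hval]
    refine h2.congr_deriv ?_
    change 1 * f p + s * fderiv ℂ f p (y i • Pi.single i 1) = _
    rw [map_smul, one_mul, smul_eq_mul]
  rw [integral_eq_sub_of_hasDerivAt (fun s _ => hprim s) ?_]
  · simp
  · exact ⟨(key y).1.1.apply_continuousLinearMap _, (key y).1.2.apply_continuousLinearMap _⟩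

theorem comp_line_eq_of_pd_eq_zero {f : (Fin 5 → ℂ) → ℂ} (hf : Differentiable ℂ f) {i : Fin 5}
    (h : ∀ y, pd i f y = 0) (y : Fin 5 → ℂ) (z : ℂ) : f (y + z • Pi.single i 1) = f y := by
  have hline := hasDerivAt_comp_line hf y (Pi.single i 1)
  simpa using is_const_of_deriv_eq_zero (fun z => (hline z).differentiableAt)
    (fun z => (hline z).deriv.trans (h _)) z 0

/-- The Poincaré lemma in the first two variables. -/
theorem exists_pd_zero_eq_pd_one_eq {a b : (Fin 5 → ℂ) → ℂ} (ha : Differentiable ℂ a)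
    (hb : Differentiable ℂ b) (hab : ∀ y, pd 1 a y = pd 0 b y) :
    ∃ g, Differentiable ℂ g ∧ (∀ y, pd 0 g y = a y) ∧ ∀ y, pd 1 g y = b y := by
  obtain ⟨g, hg, hga⟩ := exists_pd_eq ha 0
  have hd : Differentiable ℂ fun y => b y - pd 1 g y := hb.sub (hg.pd 1)
  have hd0 : ∀ y, pd 0 (fun y => b y - pd 1 g y) y = 0 := fun y => by
    rw [pd_sub hb (hg.pd 1), pd_comm hg, funext hga, hab, sub_self]
  obtain ⟨h, hh, hhd⟩ := exists_pd_eq hd 1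
  have hproj : ∀ (i : Fin 5) (y : Fin 5 → ℂ),
      pd i (fun y => h (y + (-y 0) • Pi.single 0 1)) y =
        fderiv ℂ h (y + (-y 0) • Pi.single 0 1)
          (Pi.single i 1 - (Pi.single i (1 : ℂ) : Fin 5 → ℂ) 0 • Pi.single 0 1) := by
    intro i y
    have hin : HasFDerivAt (fun y : Fin 5 → ℂ => y + (-y 0) • (Pi.single 0 1 : Fin 5 → ℂ)) _ y :=
      (hasFDerivAt_id y).add
        ((ContinuousLinearMap.proj (R := ℂ) (φ := fun _ : Fin 5 => ℂ) 0
          ).hasFDerivAt.neg.smul_const _)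
    rw [pd, show fderiv ℂ (fun y => h (y + (-y 0) • Pi.single 0 1)) y = _ from
      ((hh _).hasFDerivAt.comp y hin).fderiv]
    simp [sub_eq_add_neg]
  have hcomp : Differentiable ℂ fun y => h (y + (-y 0) • Pi.single 0 1) := by fun_prop
  refine ⟨fun y => g y + h (y + (-y 0) • Pi.single 0 1), hg.add hcomp, fun y => ?_, fun y => ?_⟩
  · rw [pd_add hg hcomp, hproj, hga]
    simp
  · have := hhd (y + (-y 0) • Pi.single 0 1)
    rw [comp_line_eq_of_pd_eq_zero hd hd0] at this
    rw [pd_add hg hcomp, hproj, Pi.single_eq_of_ne (by decide), zero_smul, sub_zero]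
    exact (congrArg _ this).trans (add_sub_cancel _ _)

theorem Differentiable.V00 {f : (Fin 5 → ℂ) → ℂ} (hf : Differentiable ℂ f) :
    Differentiable ℂ (V00 f) :=
  (hf.pd 0).sub ((differentiable_apply 3).mul (hf.pd 4))

theorem Differentiable.V01 {f : (Fin 5 → ℂ) → ℂ} (hf : Differentiable ℂ f) :
    Differentiable ℂ (V01 f) :=
  (hf.pd 2).add ((differentiable_apply 1).mul (hf.pd 4))

theorem Differentiable.V10 {f : (Fin 5 → ℂ) → ℂ} (hf : Differentiable ℂ f) :
    Differentiable ℂ (V10 f) :=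
  (hf.pd 1).sub ((differentiable_apply 2).mul (hf.pd 4))

theorem Differentiable.V11 {f : (Fin 5 → ℂ) → ℂ} (hf : Differentiable ℂ f) :
    Differentiable ℂ (V11 f) :=
  (hf.pd 3).add ((differentiable_apply 0).mul (hf.pd 4))

theorem pd_pd_add_coord_mul {f : (Fin 5 → ℂ) → ℂ} (hf : Differentiable ℂ f) (i j k : Fin 5)
    (y : Fin 5 → ℂ) : pd i (fun x => pd j f x + x k * pd 4 f x) y =
      pd i (pd j f) y + (y k * pd i (pd 4 f) y +
        (Pi.single i (1 : ℂ) : Fin 5 → ℂ) k * pd 4 f y) := by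
  rw [pd_add (hf.pd j) ((differentiable_apply k).fun_mul (hf.pd 4)), pd_coord_mul (hf.pd 4)]

theorem pd_pd_sub_coord_mul {f : (Fin 5 → ℂ) → ℂ} (hf : Differentiable ℂ f) (i j k : Fin 5)
    (y : Fin 5 → ℂ) : pd i (fun x => pd j f x - x k * pd 4 f x) y =
      pd i (pd j f) y - (y k * pd i (pd 4 f) y +
        (Pi.single i (1 : ℂ) : Fin 5 → ℂ) k * pd 4 f y) := by
  rw [pd_sub (hf.pd j) ((differentiable_apply k).fun_mul (hf.pd 4)), pd_coord_mul (hf.pd 4)]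

theorem V00_V10_comm {f : (Fin 5 → ℂ) → ℂ} (hf : Differentiable ℂ f) (y : Fin 5 → ℂ) :
    V00 (V10 f) y = V10 (V00 f) y := by
  unfold V00 V10
  simp only [pd_pd_sub_coord_mul hf, pd_comm hf 1 0, pd_comm hf 4 0, pd_comm hf 4 1]
  simp
  ring

theorem V01_V11_comm {f : (Fin 5 → ℂ) → ℂ} (hf : Differentiable ℂ f) (y : Fin 5 → ℂ) :
    V01 (V11 f) y = V11 (V01 f) y := by
  unfold V01 V11
  simp only [pd_pd_add_coord_mul hf, pd_comm hf 3 2, pd_comm hf 4 2, pd_comm hf 4 3]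
  simp
  ring

/-- The two orderings of the sub-Laplacian agree, since `[V₀₀′, V₁₁′] = [V₁₀′, V₀₁′]`. -/
theorem subLaplacian_eq {f : (Fin 5 → ℂ) → ℂ} (hf : Differentiable ℂ f) (y : Fin 5 → ℂ) :
    V00 (V11 f) y - V10 (V01 f) y = V11 (V00 f) y - V01 (V10 f) y := by
  unfold V00 V01 V10 V11
  simp only [pd_pd_add_coord_mul hf, pd_pd_sub_coord_mul hf, pd_comm hf 3 0, pd_comm hf 2 1,
    pd_comm hf 4 0, pd_comm hf 4 1, pd_comm hf 4 2, pd_comm hf 4 3]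
  simp
  ring

/-- The vertical shear `y ↦ y + c (y₀₀′ y₁₁′ + y₁₀′ y₀₁′) ∂_t`; for `c = 1` it straightens
`V₀₀′` and `V₁₀′` into coordinate fields, and `c = -1` gives the inverse. -/
noncomputable def shear (c : ℂ) (y : Fin 5 → ℂ) : Fin 5 → ℂ :=
  y + (c * (y 0 * y 3 + y 1 * y 2)) • Pi.single 4 1

theorem differentiable_shear (c : ℂ) : Differentiable ℂ (shear c) := by
  unfold shear
  fun_prop

theorem shear_neg_shear (c : ℂ) (y : Fin 5 → ℂ) : shear (-c) (shear c y) = y := by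
  ext i
  fin_cases i <;> simp [shear]

theorem pd_comp_shear {f : (Fin 5 → ℂ) → ℂ} (hf : Differentiable ℂ f) (c : ℂ) (i : Fin 5)
    (y : Fin 5 → ℂ) : pd i (fun x => f (shear c x)) y = pd i f (shear c y) +
      c * ((Pi.single i (1 : ℂ) : Fin 5 → ℂ) 0 * y 3 + y 0 * (Pi.single i (1 : ℂ) : Fin 5 → ℂ) 3 +
        (Pi.single i (1 : ℂ) : Fin 5 → ℂ) 1 * y 2 + y 1 * (Pi.single i (1 : ℂ) : Fin 5 → ℂ) 2) *
          pd 4 f (shear c y) := by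
  have hpi (k : Fin 5) : HasFDerivAt (fun y : Fin 5 → ℂ => y k)
      (ContinuousLinearMap.proj (R := ℂ) (φ := fun _ : Fin 5 => ℂ) k) y :=
    (ContinuousLinearMap.proj (R := ℂ) (φ := fun _ : Fin 5 => ℂ) k).hasFDerivAt
  have hs := (hasFDerivAt_id y).add
    (((((hpi 0).mul (hpi 3)).add ((hpi 1).mul (hpi 2))).const_mul c).smul_const
      (Pi.single 4 1 : Fin 5 → ℂ))
  have h := ((hf (shear c y)).hasFDerivAt.comp y hs).fderiv
  refine (DFunLike.congr_fun h (Pi.single i 1)).trans ?_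
  set e : Fin 5 → ℂ := Pi.single i 1 with he
  change fderiv ℂ f (shear c y) (e +
    (c * ((y 0 * e 3 + y 3 * e 0) + (y 1 * e 2 + y 2 * e 1))) • Pi.single 4 1) = _
  rw [map_add, map_smul, smul_eq_mul]
  simp only [pd, he]
  ring

theorem V00_comp_shear {f : (Fin 5 → ℂ) → ℂ} (hf : Differentiable ℂ f) (y : Fin 5 → ℂ) :
    V00 (fun x => f (shear 1 x)) y = pd 0 f (shear 1 y) := by
  simp only [V00, pd_comp_shear hf]
  simp

theorem V10_comp_shear {f : (Fin 5 → ℂ) → ℂ} (hf : Differentiable ℂ f) (y : Fin 5 → ℂ) :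
    V10 (fun x => f (shear 1 x)) y = pd 1 f (shear 1 y) := by
  simp only [V10, pd_comp_shear hf]
  simp

theorem exists_V00_eq_V10_eq {a b : (Fin 5 → ℂ) → ℂ} (ha : Differentiable ℂ a)
    (hb : Differentiable ℂ b) (hab : ∀ y, V10 a y = V00 b y) :
    ∃ g, Differentiable ℂ g ∧ (∀ y, V00 g y = a y) ∧ ∀ y, V10 g y = b y := by
  obtain ⟨g, hg, hga, hgb⟩ := exists_pd_zero_eq_pd_one_eq
    (ha.comp (differentiable_shear (-1))) (hb.comp (differentiable_shear (-1))) (fun y => by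
      have := hab (shear (-1) y)
      simp only [V10, V00] at this
      simp only [Function.comp_def, pd_comp_shear ha, pd_comp_shear hb]
      simp [shear] at this ⊢
      linear_combination this)
  refine ⟨fun y => g (shear 1 y), hg.comp (differentiable_shear 1), fun y => ?_, fun y => ?_⟩
  · rw [V00_comp_shear hg, hga, Function.comp_apply, shear_neg_shear]
  · rw [V10_comp_shear hg, hgb, Function.comp_apply, shear_neg_shear]

/-- The involution of the Heisenberg group exchanging `V₀₀′` with `V₀₁′` and `V₁₀′` with `V₁₁′`. -/
noncomputable def swapPrimed : (Fin 5 → ℂ) →L[ℂ] (Fin 5 → ℂ) :=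
  ContinuousLinearMap.pi ![.proj 2, .proj 3, .proj 0, .proj 1, -.proj 4]

theorem swapPrimed_apply (y : Fin 5 → ℂ) : swapPrimed y = ![y 2, y 3, y 0, y 1, -y 4] := by
  ext i
  fin_cases i <;> rfl

theorem swapPrimed_swapPrimed (y : Fin 5 → ℂ) : swapPrimed (swapPrimed y) = y := by
  ext i
  fin_cases i <;> simp [swapPrimed_apply]

theorem pd_comp_swapPrimed {f : (Fin 5 → ℂ) → ℂ} (hf : Differentiable ℂ f) (i : Fin 5)
    (y : Fin 5 → ℂ) : pd i (fun x => f (swapPrimed x)) y =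
      fderiv ℂ f (swapPrimed y) (swapPrimed (Pi.single i 1)) :=
  DFunLike.congr_fun ((hf _).hasFDerivAt.comp y swapPrimed.hasFDerivAt).fderiv _

theorem swapPrimed_single (i : Fin 5) : swapPrimed (Pi.single i 1) =
    ![Pi.single 2 1, Pi.single 3 1, Pi.single 0 1, Pi.single 1 1, -Pi.single 4 1] i := by
  ext j
  fin_cases i <;> fin_cases j <;> simp [swapPrimed_apply]

theorem V00_comp_swapPrimed {f : (Fin 5 → ℂ) → ℂ} (hf : Differentiable ℂ f) (y : Fin 5 → ℂ) :
    V00 (fun x => f (swapPrimed x)) y = V01 f (swapPrimed y) := by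
  simp only [V00, V01, pd_comp_swapPrimed hf, swapPrimed_single]
  simp [pd, swapPrimed_apply]

theorem V01_comp_swapPrimed {f : (Fin 5 → ℂ) → ℂ} (hf : Differentiable ℂ f) (y : Fin 5 → ℂ) :
    V01 (fun x => f (swapPrimed x)) y = V00 f (swapPrimed y) := by
  simp only [V00, V01, pd_comp_swapPrimed hf, swapPrimed_single]
  simp [pd, swapPrimed_apply, sub_eq_add_neg]

theorem V10_comp_swapPrimed {f : (Fin 5 → ℂ) → ℂ} (hf : Differentiable ℂ f) (y : Fin 5 → ℂ) :
    V10 (fun x => f (swapPrimed x)) y = V11 f (swapPrimed y) := by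
  simp only [V10, V11, pd_comp_swapPrimed hf, swapPrimed_single]
  simp [pd, swapPrimed_apply]

theorem V11_comp_swapPrimed {f : (Fin 5 → ℂ) → ℂ} (hf : Differentiable ℂ f) (y : Fin 5 → ℂ) :
    V11 (fun x => f (swapPrimed x)) y = V10 f (swapPrimed y) := by
  simp only [V10, V11, pd_comp_swapPrimed hf, swapPrimed_single]
  simp [pd, swapPrimed_apply, sub_eq_add_neg]

theorem exists_V01_eq_V11_eq {a b : (Fin 5 → ℂ) → ℂ} (ha : Differentiable ℂ a)
    (hb : Differentiable ℂ b) (hab : ∀ y, V11 a y = V01 b y) :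
    ∃ g, Differentiable ℂ g ∧ (∀ y, V01 g y = a y) ∧ ∀ y, V11 g y = b y := by
  obtain ⟨g, hg, hga, hgb⟩ := exists_V00_eq_V10_eq
    (ha.comp swapPrimed.differentiable) (hb.comp swapPrimed.differentiable) (fun y => by
      simp only [Function.comp_def, V10_comp_swapPrimed ha, V00_comp_swapPrimed hb, hab])
  refine ⟨fun y => g (swapPrimed y), hg.comp swapPrimed.differentiable, fun y => ?_, fun y => ?_⟩
  · rw [V01_comp_swapPrimed hg, hga, Function.comp_apply, swapPrimed_swapPrimed]
  · rw [V11_comp_swapPrimed hg, hgb, Function.comp_apply, swapPrimed_swapPrimed]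

/-- Entire functions annihilated by the sub-Laplacian. -/
def IsSubLaplaceEntire (f : (Fin 5 → ℂ) → ℂ) : Prop :=
  Differentiable ℂ f ∧ ∀ y, V00 (V11 f) y - V10 (V01 f) y = 0

theorem IsSubLaplaceEntire.exists_next {f : (Fin 5 → ℂ) → ℂ} (hf : IsSubLaplaceEntire f) :
    ∃ g, IsSubLaplaceEntire g ∧ (∀ y, V01 f y = V00 g y) ∧ ∀ y, V11 f y = V10 g y := by
  obtain ⟨g, hg, h0, h1⟩ := exists_V00_eq_V10_eq hf.1.V01 hf.1.V11
    fun y => (sub_eq_zero.1 (hf.2 y)).symm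
  refine ⟨g, ⟨hg, fun y => ?_⟩, fun y => (h0 y).symm, fun y => (h1 y).symm⟩
  rw [subLaplacian_eq hg, funext h0, funext h1, V01_V11_comm hf.1, sub_self]

theorem IsSubLaplaceEntire.exists_prev {f : (Fin 5 → ℂ) → ℂ} (hf : IsSubLaplaceEntire f) :
    ∃ g, IsSubLaplaceEntire g ∧ (∀ y, V01 g y = V00 f y) ∧ ∀ y, V11 g y = V10 f y := by
  obtain ⟨g, hg, h0, h1⟩ := exists_V01_eq_V11_eq hf.1.V00 hf.1.V10
    fun y => sub_eq_zero.1 ((subLaplacian_eq hf.1 y).symm.trans (hf.2 y))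
  refine ⟨g, ⟨hg, fun y => ?_⟩, h0, h1⟩
  rw [funext h0, funext h1, V00_V10_comm hf.1, sub_self]

/-- A relation that is total in both directions admits a two-sided chain through any point. -/
theorem exists_int_chain {α : Type*} {r : α → α → Prop} (hnext : ∀ a, ∃ b, r a b)
    (hprev : ∀ b, ∃ a, r a b) (a₀ : α) : ∃ u : ℤ → α, u 0 = a₀ ∧ ∀ i, r (u i) (u (i + 1)) := by
  choose next hnext using hnext
  choose prev hprev using hprev
  let u : ℤ → α := fun i => match i with
    | .ofNat n => next^[n] a₀
    | .negSucc n => prev^[n + 1] a₀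
  refine ⟨u, rfl, fun i => ?_⟩
  match i with
  | .ofNat n =>
    change r (next^[n] a₀) (next^[n + 1] a₀)
    rw [Function.iterate_succ_apply']
    exact hnext _
  | .negSucc 0 => exact hprev a₀
  | .negSucc (n + 1) =>
    change r (prev^[n + 1 + 1] a₀) (prev^[n + 1] a₀)
    rw [Function.iterate_succ_apply' prev (n + 1)]
    exact hprev _

/-- If `γ₀` is entire and satisfies the sub-Laplacian equation
`Δ_bγ₀ = V₀₀′(V₁₁′γ₀) − V₁₀′(V₀₁′γ₀) = 0`, then there is a two-sided sequence
`(γ_i)_{i ∈ ℤ}` of entire functions with `γ_0 = γ₀` satisfying the recursion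
`V₀₁′γ_i = V₀₀′γ_{i+1}` and `V₁₁′γ_i = V₁₀′γ_{i+1}` for all `i ∈ ℤ`. -/
theorem laurent_recursion_solvable (γ₀ : (Fin 5 → ℂ) → ℂ)
    (hγ₀ : Differentiable ℂ γ₀)
    (hlap : ∀ y, V00 (V11 γ₀) y - V10 (V01 γ₀) y = 0) :
    ∃ γ : ℤ → (Fin 5 → ℂ) → ℂ,
      γ 0 = γ₀ ∧
      (∀ i : ℤ, Differentiable ℂ (γ i)) ∧
      (∀ i : ℤ, ∀ y, V01 (γ i) y = V00 (γ (i + 1)) y) ∧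
      (∀ i : ℤ, ∀ y, V11 (γ i) y = V10 (γ (i + 1)) y) := by
  obtain ⟨u, hu0, hu⟩ := exists_int_chain
    (r := fun f g : {f // IsSubLaplaceEntire f} =>
      (∀ y, V01 f.1 y = V00 g.1 y) ∧ ∀ y, V11 f.1 y = V10 g.1 y)
    (fun f => let ⟨g, hg, h⟩ := f.2.exists_next; ⟨⟨g, hg⟩, h⟩)
    (fun f => let ⟨g, hg, h⟩ := f.2.exists_prev; ⟨⟨g, hg⟩, h⟩) ⟨γ₀, hγ₀, hlap⟩
  exact ⟨fun i => (u i).1, congrArg Subtype.val hu0, fun i => (u i).2.1,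
    fun i => (hu i).1, fun i => (hu i).2⟩
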